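/- For the BB(1̄, 1̄, 3, 3̄) code, with f = 1 + x + x^{-1} y^{-3} and g = 1 + y + y^{-1} x³ in R, the topological index is Q = dim_{F₂} R ⧸ (f, g) = 13; hence k_max = 26. -/

import Mathlib

noncomputable section

/-- The Laurent polynomial ring `F₂[x^±, y^±]` as a group algebra. -/
abbrev LaurentR : Type := AddMonoidAlgebra (ZMod 2) (ℤ × ℤ)

/-- The monomial `x^i y^j`. -/
def mono (i j : ℤ) : LaurentR := AddMonoidAlgebra.single (i, j) 1

/-- Multiplication by `x` on the quotient, in the basis `1, x, …, x¹⁰, z, xz`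
with `z = y + x⁴ + x⁶`. -/
def xMatrix : Matrix (Fin 13) (Fin 13) (ZMod 2) :=
  !![0, 0, 0, 0, 0, 0, 0, 0, 0, 0, 1, 0, 0;
      1, 0, 0, 0, 0, 0, 0, 0, 0, 0, 0, 0, 0;
      0, 1, 0, 0, 0, 0, 0, 0, 0, 0, 0, 0, 0;
      0, 0, 1, 0, 0, 0, 0, 0, 0, 0, 0, 0, 0;
      0, 0, 0, 1, 0, 0, 0, 0, 0, 0, 1, 0, 0;
      0, 0, 0, 0, 1, 0, 0, 0, 0, 0, 0, 0, 0;
      0, 0, 0, 0, 0, 1, 0, 0, 0, 0, 1, 0, 0;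
      0, 0, 0, 0, 0, 0, 1, 0, 0, 0, 1, 0, 0;
      0, 0, 0, 0, 0, 0, 0, 1, 0, 0, 0, 0, 0;
      0, 0, 0, 0, 0, 0, 0, 0, 1, 0, 1, 0, 0;
      0, 0, 0, 0, 0, 0, 0, 0, 0, 1, 1, 0, 0;
      0, 0, 0, 0, 0, 0, 0, 0, 0, 0, 0, 0, 1;
      0, 0, 0, 0, 0, 0, 0, 0, 0, 0, 0, 1, 1]

/-- Multiplication by `y` on the quotient, in the same basis as `xMatrix`. -/
def yMatrix : Matrix (Fin 13) (Fin 13) (ZMod 2) :=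
  !![0, 0, 0, 0, 0, 1, 1, 1, 0, 0, 0, 1, 0;
      0, 0, 0, 0, 0, 0, 1, 1, 1, 0, 0, 1, 1;
      0, 0, 0, 0, 0, 0, 0, 1, 1, 1, 0, 0, 1;
      0, 0, 0, 0, 0, 0, 0, 0, 1, 1, 1, 1, 0;
      1, 0, 0, 0, 0, 1, 1, 1, 0, 1, 1, 0, 1;
      0, 1, 0, 0, 0, 0, 1, 1, 1, 0, 1, 1, 0;
      1, 0, 1, 0, 0, 1, 1, 0, 1, 1, 0, 0, 1;
      0, 1, 0, 1, 0, 1, 0, 0, 0, 1, 1, 0, 0;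
      0, 0, 1, 0, 1, 0, 1, 0, 0, 0, 1, 0, 0;
      0, 0, 0, 1, 0, 0, 1, 0, 0, 0, 0, 1, 0;
      0, 0, 0, 0, 1, 1, 1, 0, 0, 0, 0, 0, 1;
      1, 0, 1, 1, 0, 1, 1, 0, 1, 1, 0, 0, 1;
      0, 1, 1, 0, 1, 1, 0, 1, 1, 0, 1, 1, 1]

lemma xMatrix_mul_yMatrix : xMatrix * yMatrix = yMatrix * xMatrix := by
  decide +kernel

lemma yMatrix_add_sq : yMatrix + yMatrix * yMatrix + xMatrix * (xMatrix * xMatrix) = 0 := by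
  decide +kernel

lemma xMatrix_relation :
    xMatrix * ((1 + xMatrix) * (yMatrix * (yMatrix * yMatrix))) = 1 := by
  decide +kernel

lemma isUnit_xMatrix : IsUnit xMatrix :=
  IsUnit.of_mul_eq_one _ xMatrix_relation

lemma isUnit_yMatrix : IsUnit yMatrix := by
  refine IsUnit.of_mul_eq_one_right (xMatrix * ((1 + xMatrix) * (yMatrix * yMatrix))) ?_
  simpa only [mul_assoc] using xMatrix_relation

/-- The pair of commuting invertible matrices `xMatrix`, `yMatrix` as a homomorphism out of the
group of monomials. -/
def monomialHom : Multiplicative (ℤ × ℤ) →* Matrix (Fin 13) (Fin 13) (ZMod 2) where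
  toFun m := ((isUnit_xMatrix.unit ^ m.toAdd.1 * isUnit_yMatrix.unit ^ m.toAdd.2 :
    (Matrix (Fin 13) (Fin 13) (ZMod 2))ˣ) : Matrix (Fin 13) (Fin 13) (ZMod 2))
  map_one' := by simp
  map_mul' m n := by
    have h : Commute isUnit_xMatrix.unit isUnit_yMatrix.unit :=
      Units.ext xMatrix_mul_yMatrix
    rw [← Units.val_mul, toAdd_mul, Prod.fst_add, Prod.snd_add, zpow_add, zpow_add,
      mul_assoc, mul_assoc, ← mul_assoc (_ ^ n.toAdd.1), (h.zpow_zpow _ _).eq, mul_assoc]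

/-- The representation of `LaurentR` in which `x` and `y` act by `xMatrix` and `yMatrix`. -/
def laurentRep : LaurentR →ₐ[ZMod 2] Matrix (Fin 13) (Fin 13) (ZMod 2) :=
  AddMonoidAlgebra.lift (ZMod 2) _ _ monomialHom

lemma laurentRep_x : laurentRep (mono 1 0) = xMatrix := by
  simp [laurentRep, mono, monomialHom]

lemma laurentRep_y : laurentRep (mono 0 1) = yMatrix := by
  simp [laurentRep, mono, monomialHom]

lemma mono_mul_mono (i j k l : ℤ) : mono i j * mono k l = mono (i + k) (j + l) := by
  simp [mono, AddMonoidAlgebra.single_mul_single]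

lemma mono_zero : mono 0 0 = 1 := rfl

lemma mono_pow (i j : ℤ) (n : ℕ) : mono i j ^ n = mono (n * i) (n * j) := by
  simp [mono, AddMonoidAlgebra.single_pow]

lemma first_generator_mul :
    (1 + mono 1 0 + mono (-1) (-3)) * mono 1 3 =
      mono 1 0 * ((1 + mono 1 0) * (mono 0 1 * (mono 0 1 * mono 0 1))) + 1 := by
  simp [add_mul, mul_add, mono_mul_mono, mono_zero]

lemma second_generator_mul :
    (1 + mono 0 1 + mono 3 (-1)) * mono 0 1 =
      mono 0 1 + mono 0 1 * mono 0 1 + mono 1 0 * (mono 1 0 * mono 1 0) := by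
  simp [add_mul, mono_mul_mono]

/-- The ideal `(f, g)`. -/
abbrev codeIdeal : Ideal LaurentR :=
  Ideal.span {1 + mono 1 0 + mono (-1) (-3), 1 + mono 0 1 + mono 3 (-1)}

lemma laurentRep_eq_zero_of_mul_mono {a : LaurentR} {i j : ℤ}
    (h : laurentRep (a * mono i j) = 0) : laurentRep a = 0 := by
  have : a = a * mono i j * mono (-i) (-j) := by
    simp [mul_assoc, mono_mul_mono, mono_zero]
  rw [this, map_mul, h, zero_mul]

lemma laurentRep_eq_zero_of_mem {a : LaurentR} (ha : a ∈ codeIdeal) : laurentRep a = 0 := by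
  suffices h : codeIdeal ≤ RingHom.ker laurentRep from h ha
  rw [Ideal.span_le]
  rintro _ (rfl | rfl)
  · refine laurentRep_eq_zero_of_mul_mono (i := 1) (j := 3) ?_
    rw [first_generator_mul]
    simp only [map_add, map_mul, map_one, laurentRep_x, laurentRep_y, xMatrix_relation]
    exact CharTwo.add_self_eq_zero _
  · refine laurentRep_eq_zero_of_mul_mono (i := 0) (j := 1) ?_
    rw [second_generator_mul]
    simp only [map_add, map_mul, laurentRep_x, laurentRep_y, yMatrix_add_sq]

/-- The orbit map `a ↦ a • e₀` of the representation on the quotient. -/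
def orbitMap : (LaurentR ⧸ codeIdeal) →ₗ[ZMod 2] (Fin 13 → ZMod 2) :=
  (Submodule.liftQ (codeIdeal.restrictScalars (ZMod 2))
    ((Matrix.mulVecBilin (ZMod 2) (ZMod 2)).flip (Pi.single 0 1) ∘ₗ laurentRep.toLinearMap)
    fun a ha => by simp [laurentRep_eq_zero_of_mem (Submodule.restrictScalars_mem _ _ _ |>.1 ha)])

lemma orbitMap_mk (a : LaurentR) :
    orbitMap (Ideal.Quotient.mk _ a) = (laurentRep a).mulVec (Pi.single 0 1) :=
  rfl

lemma xMatrix_mulVec_single : ∀ i : Fin 12, i ≠ 10 →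
    xMatrix.mulVec (Pi.single i.castSucc 1) = Pi.single i.succ 1 := by
  decide +kernel

lemma yMatrix_mulVec_single_zero :
    yMatrix.mulVec (Pi.single 0 1) = Pi.single 11 1 + Pi.single 4 1 + Pi.single 6 1 := by
  decide +kernel

lemma orbitMap_surjective : Function.Surjective orbitMap := by
  have hx : ∀ v ∈ LinearMap.range orbitMap, xMatrix.mulVec v ∈ LinearMap.range orbitMap := by
    rintro _ ⟨a, rfl⟩
    obtain ⟨a, rfl⟩ := Ideal.Quotient.mk_surjective a
    exact ⟨Ideal.Quotient.mk _ (mono 1 0 * a), by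
      rw [orbitMap_mk, orbitMap_mk, map_mul, laurentRep_x, Matrix.mulVec_mulVec]⟩
  have h0 : Pi.single 0 1 ∈ LinearMap.range orbitMap :=
    ⟨Ideal.Quotient.mk _ 1, by rw [orbitMap_mk, map_one, Matrix.one_mulVec]⟩
  have hy : yMatrix.mulVec (Pi.single 0 1) ∈ LinearMap.range orbitMap :=
    ⟨Ideal.Quotient.mk _ (mono 0 1), by simp [orbitMap_mk, laurentRep_y]⟩
  have hstep (i : Fin 12) (hi : i ≠ 10) (h : Pi.single i.castSucc 1 ∈ LinearMap.range orbitMap) :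
      Pi.single i.succ 1 ∈ LinearMap.range orbitMap :=
    xMatrix_mulVec_single i hi ▸ hx _ h
  have h1 := hstep 0 (by decide) h0
  have h2 := hstep 1 (by decide) h1
  have h3 := hstep 2 (by decide) h2
  have h4 := hstep 3 (by decide) h3
  have h5 := hstep 4 (by decide) h4
  have h6 := hstep 5 (by decide) h5
  have h7 := hstep 6 (by decide) h6
  have h8 := hstep 7 (by decide) h7
  have h9 := hstep 8 (by decide) h8
  have h10 := hstep 9 (by decide) h9
  have h11 : Pi.single 11 1 ∈ LinearMap.range orbitMap := by
    rw [yMatrix_mulVec_single_zero] at hy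
    exact (Submodule.add_mem_iff_left _ h4).1 ((Submodule.add_mem_iff_left _ h6).1 hy)
  have h12 := hstep 11 (by decide) h11
  rw [← LinearMap.range_eq_top, eq_top_iff, ← (Pi.basisFun (ZMod 2) (Fin 13)).span_eq,
    Submodule.span_le]
  rintro _ ⟨i, rfl⟩
  rw [Pi.basisFun_apply]
  fin_cases i
  exacts [h0, h1, h2, h3, h4, h5, h6, h7, h8, h9, h10, h11, h12]

section SpanningFamily

variable {A : Type*} [CommRing A] {x y : A}

lemma quadratic_mul_shift_eq_zero (h2 : (2 : A) = 0) (hf : x * (1 + x) * y ^ 3 = 1)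
    (hg : y + y ^ 2 + x ^ 3 = 0) : (1 + x + x ^ 2) * (y + x ^ 4 + x ^ 6) = 0 := by
  grind

lemma pow_eleven_eq (h2 : (2 : A) = 0) (hf : x * (1 + x) * y ^ 3 = 1)
    (hg : y + y ^ 2 + x ^ 3 = 0) :
    x ^ 11 = 1 + x ^ 4 + x ^ 6 + x ^ 7 + x ^ 9 + x ^ 10 := by
  grind

lemma mul_shift_eq (h2 : (2 : A) = 0) (hg : y + y ^ 2 + x ^ 3 = 0) :
    y * (y + x ^ 4 + x ^ 6) = (y + x ^ 4 + x ^ 6) + x ^ 4 * (y + x ^ 4 + x ^ 6) +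
      x ^ 6 * (y + x ^ 4 + x ^ 6) + (x ^ 3 + x ^ 4 + x ^ 6 + x ^ 8 + x ^ 12) := by
  grind

/-- The family `1, x, …, x¹⁰, z, xz` with `z = y + x⁴ + x⁶`. -/
def spanningFamily (x y : A) : Fin 13 → A :=
  Fin.append (fun i : Fin 11 => x ^ (i : ℕ)) (fun i : Fin 2 => x ^ (i : ℕ) * (y + x ^ 4 + x ^ 6))

variable [Algebra (ZMod 2) A]

lemma forall_mem_span_spanningFamily {P : A → Prop}
    (h0 : P 0) (hadd : ∀ a b, P a → P b → P (a + b))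
    (hsmul : ∀ (c : ZMod 2) a, P a → P (c • a))
    (hpow : ∀ n < 11, P (x ^ n)) (hshift : ∀ n < 2, P (x ^ n * (y + x ^ 4 + x ^ 6))) :
    ∀ s ∈ Submodule.span (ZMod 2) (Set.range (spanningFamily x y)), P s := by
  intro s hs
  induction hs using Submodule.span_induction with
  | mem s hs =>
    obtain ⟨i, rfl⟩ := hs
    induction i using Fin.addCases (m := 11) (n := 2) with
    | left i => simpa only [spanningFamily, Fin.append_left] using hpow i i.2
    | right i => simpa only [spanningFamily, Fin.append_right] using hshift i i.2
  | zero => exact h0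
  | add a b _ _ ha hb => exact hadd a b ha hb
  | smul c a _ ha => exact hsmul c a ha

lemma pow_mem_span_of_lt {n : ℕ} (hn : n < 11) :
    x ^ n ∈ Submodule.span (ZMod 2) (Set.range (spanningFamily x y)) :=
  Submodule.subset_span ⟨Fin.castAdd 2 ⟨n, hn⟩, by simp only [spanningFamily, Fin.append_left]⟩

lemma pow_mul_shift_mem_span_of_lt {n : ℕ} (hn : n < 2) :
    x ^ n * (y + x ^ 4 + x ^ 6) ∈ Submodule.span (ZMod 2) (Set.range (spanningFamily x y)) :=
  Submodule.subset_span ⟨Fin.natAdd 11 ⟨n, hn⟩, by simp only [spanningFamily, Fin.append_right]⟩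

lemma left_mul_mem_span (h2 : (2 : A) = 0) (hf : x * (1 + x) * y ^ 3 = 1)
    (hg : y + y ^ 2 + x ^ 3 = 0) :
    ∀ s ∈ Submodule.span (ZMod 2) (Set.range (spanningFamily x y)),
      x * s ∈ Submodule.span (ZMod 2) (Set.range (spanningFamily x y)) := by
  refine forall_mem_span_spanningFamily (by simp)
    (fun a b ha hb => by rw [mul_add]; exact add_mem ha hb)
    (fun c a ha => by rw [mul_smul_comm]; exact Submodule.smul_mem _ c ha) ?_ ?_
  · intro n hn
    rw [← pow_succ']
    obtain hn | rfl : n < 10 ∨ n = 10 := by lia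
    · exact pow_mem_span_of_lt (by lia)
    · rw [pow_eleven_eq h2 hf hg, ← pow_zero x]
      refine add_mem (add_mem (add_mem (add_mem (add_mem ?_ ?_) ?_) ?_) ?_) ?_ <;>
        exact pow_mem_span_of_lt (by norm_num)
  · intro n hn
    rw [← mul_assoc, ← pow_succ']
    obtain rfl | rfl : n = 0 ∨ n = 1 := by lia
    · exact pow_mul_shift_mem_span_of_lt (by norm_num)
    · have h : x ^ (1 + 1) * (y + x ^ 4 + x ^ 6) =
          x ^ 0 * (y + x ^ 4 + x ^ 6) + x ^ 1 * (y + x ^ 4 + x ^ 6) := by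
        linear_combination quadratic_mul_shift_eq_zero h2 hf hg -
          (1 + x) * (y + x ^ 4 + x ^ 6) * h2
      rw [h]
      exact add_mem (pow_mul_shift_mem_span_of_lt (by norm_num))
        (pow_mul_shift_mem_span_of_lt (by norm_num))

lemma right_mul_mem_span (h2 : (2 : A) = 0) (hf : x * (1 + x) * y ^ 3 = 1)
    (hg : y + y ^ 2 + x ^ 3 = 0) :
    ∀ s ∈ Submodule.span (ZMod 2) (Set.range (spanningFamily x y)),
      y * s ∈ Submodule.span (ZMod 2) (Set.range (spanningFamily x y)) := by
  have hmul (n : ℕ) {s : A} (hs : s ∈ Submodule.span (ZMod 2) (Set.range (spanningFamily x y))) :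
      x ^ n * s ∈ Submodule.span (ZMod 2) (Set.range (spanningFamily x y)) := by
    induction n with
    | zero => simpa using hs
    | succ n ih => rw [pow_succ', mul_assoc]; exact left_mul_mem_span h2 hf hg _ ih
  have hpow (n : ℕ) : x ^ n ∈ Submodule.span (ZMod 2) (Set.range (spanningFamily x y)) := by
    simpa using hmul n (pow_mem_span_of_lt (n := 0) (by norm_num))
  have hshift : y + x ^ 4 + x ^ 6 ∈ Submodule.span (ZMod 2) (Set.range (spanningFamily x y)) := by
    simpa using pow_mul_shift_mem_span_of_lt (x := x) (y := y) (n := 0) (by norm_num)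
  refine forall_mem_span_spanningFamily (by simp)
    (fun a b ha hb => by rw [mul_add]; exact add_mem ha hb)
    (fun c a ha => by rw [mul_smul_comm]; exact Submodule.smul_mem _ c ha) ?_ ?_
  · intro n _
    rw [mul_comm]
    refine hmul n ?_
    simpa using sub_mem (sub_mem hshift (hpow 6)) (hpow 4)
  · intro n _
    rw [mul_left_comm, mul_shift_eq h2 hg]
    exact hmul n (add_mem (add_mem (add_mem hshift (hmul 4 hshift)) (hmul 6 hshift))
      (add_mem (add_mem (add_mem (add_mem (hpow 3) (hpow 4)) (hpow 6)) (hpow 8)) (hpow 12)))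

end SpanningFamily

lemma span_spanningFamily_eq_top :
    Submodule.span (ZMod 2) (Set.range (spanningFamily
      (Ideal.Quotient.mk codeIdeal (mono 1 0)) (Ideal.Quotient.mk codeIdeal (mono 0 1)))) = ⊤ := by
  set π := Ideal.Quotient.mk codeIdeal
  set S := Submodule.span (ZMod 2) (Set.range (spanningFamily (π (mono 1 0)) (π (mono 0 1))))
  have h2 : (2 : LaurentR ⧸ codeIdeal) = 0 := by
    have h := congrArg (algebraMap (ZMod 2) (LaurentR ⧸ codeIdeal)) CharTwo.two_eq_zero
    rwa [map_ofNat, map_zero] at h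
  have hf : π (mono 1 0) * (1 + π (mono 1 0)) * π (mono 0 1) ^ 3 = 1 := by
    have h : π ((1 + mono 1 0 + mono (-1) (-3)) * mono 1 3) = 0 :=
      Ideal.Quotient.eq_zero_iff_mem.2
        (Ideal.mul_mem_right _ _ (Ideal.subset_span (Set.mem_insert _ _)))
    rw [first_generator_mul] at h
    simp only [map_add, map_mul, map_one] at h
    linear_combination h - h2
  have hg : π (mono 0 1) + π (mono 0 1) ^ 2 + π (mono 1 0) ^ 3 = 0 := by
    have h : π ((1 + mono 0 1 + mono 3 (-1)) * mono 0 1) = 0 :=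
      Ideal.Quotient.eq_zero_iff_mem.2
        (Ideal.mul_mem_right _ _ (Ideal.subset_span (Set.mem_insert_of_mem _ rfl)))
    rw [second_generator_mul] at h
    simp only [map_add, map_mul] at h
    linear_combination h
  let T : Subsemiring (LaurentR ⧸ codeIdeal) :=
    { carrier := {a | ∀ s ∈ S, a * s ∈ S}
      zero_mem' := fun s _ => by simp
      one_mem' := fun s hs => by simpa using hs
      add_mem' := fun ha hb s hs => by rw [add_mul]; exact add_mem (ha s hs) (hb s hs)
      mul_mem' := fun ha hb s hs => by rw [mul_assoc]; exact ha _ (hb s hs) }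
  have hx : π (mono 1 0) ∈ T := left_mul_mem_span h2 hf hg
  have hy : π (mono 0 1) ∈ T := right_mul_mem_span h2 hf hg
  have hx' : π (mono (-1) 0) ∈ T := by
    have h : π (mono (-1) 0) * π (mono 1 0) = 1 := by
      rw [← map_mul, mono_mul_mono]; exact map_one π
    have : π (mono (-1) 0) = (1 + π (mono 1 0)) * π (mono 0 1) ^ 3 := by
      linear_combination (1 + π (mono 1 0)) * π (mono 0 1) ^ 3 * h - π (mono (-1) 0) * hf
    rw [this]
    exact mul_mem (add_mem (one_mem _) hx) (pow_mem hy 3)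
  have hy' : π (mono 0 (-1)) ∈ T := by
    have h : π (mono 0 (-1)) * π (mono 0 1) = 1 := by
      rw [← map_mul, mono_mul_mono]; exact map_one π
    have : π (mono 0 (-1)) = π (mono 1 0) * (1 + π (mono 1 0)) * π (mono 0 1) ^ 2 := by
      linear_combination π (mono 1 0) * (1 + π (mono 1 0)) * π (mono 0 1) ^ 2 * h -
        π (mono 0 (-1)) * hf
    rw [this]
    exact mul_mem (mul_mem hx (add_mem (one_mem _) hx)) (pow_mem hy 2)
  have hmono (i j : ℤ) : π (mono i j) ∈ T := by
    have hi : π (mono i 0) ∈ T := by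
      obtain ⟨n, rfl | rfl⟩ := i.eq_nat_or_neg
      · simpa [← map_pow, mono_pow] using pow_mem hx n
      · simpa [← map_pow, mono_pow] using pow_mem hx' n
    have hj : π (mono 0 j) ∈ T := by
      obtain ⟨n, rfl | rfl⟩ := j.eq_nat_or_neg
      · simpa [← map_pow, mono_pow] using pow_mem hy n
      · simpa [← map_pow, mono_pow] using pow_mem hy' n
    simpa [← map_mul, mono_mul_mono] using mul_mem hi hj
  have h1 : (1 : LaurentR ⧸ codeIdeal) ∈ S := by
    simpa using pow_mem_span_of_lt (x := π (mono 1 0)) (y := π (mono 0 1)) (n := 0) (by norm_num)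
  rw [eq_top_iff]
  rintro a -
  obtain ⟨a, rfl⟩ := Ideal.Quotient.mk_surjective a
  induction a using AddMonoidAlgebra.induction_linear with
  | zero => exact (map_zero π) ▸ zero_mem S
  | add a b ha hb => rw [map_add]; exact add_mem ha hb
  | single m c =>
    have h : (AddMonoidAlgebra.single m c : LaurentR) = c • mono m.1 m.2 := by simp [mono]
    rw [h]
    exact S.smul_mem c (by simpa using hmono m.1 m.2 1 h1)

lemma finrank_quotient_codeIdeal : Module.finrank (ZMod 2) (LaurentR ⧸ codeIdeal) = 13 := by
  have hfin : Module.Finite (ZMod 2) (LaurentR ⧸ codeIdeal) :=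
    ⟨span_spanningFamily_eq_top ▸ Submodule.fg_span (Set.finite_range _)⟩
  apply le_antisymm
  · rw [← finrank_top, ← span_spanningFamily_eq_top]
    exact (finrank_range_le_card _).trans (by simp)
  · simpa using LinearMap.finrank_le_finrank_of_surjective orbitMap_surjective

/-- For the BB(1̄, 1̄, 3, 3̄) code, with `f = 1 + x + x⁻¹y⁻³` and `g = 1 + y + y⁻¹x³`, the
topological index is `Q = dim_{F₂} R/(f, g) = 13`; hence `k_max = 2Q = 26`. -/
theorem bb_1133bar_topological_index :
    Module.finrank (ZMod 2)
      (LaurentR ⧸ Ideal.span ({1 + mono 1 0 + mono (-1) (-3),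
        1 + mono 0 1 + mono 3 (-1)} : Set LaurentR)) = 13 ∧
    2 * Module.finrank (ZMod 2)
      (LaurentR ⧸ Ideal.span ({1 + mono 1 0 + mono (-1) (-3),
        1 + mono 0 1 + mono 3 (-1)} : Set LaurentR)) = 26 := by
  exact ⟨finrank_quotient_codeIdeal, by rw [finrank_quotient_codeIdeal]⟩
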